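/- Let c_n^{−,−} = E_n^sep(A_n^{−,−} | B_1^{+,n}=n), the average of A_n^{−,−}(σ) over indecomposable σ ∈ SEP(n). Then for every real t with |t| < 3 − 2√2, the series G^{−,−}(t) = ∑_{n=1}^∞ s_n c_n^{−,−} t^n converges and G^{−,−}(t) = t(1−t)/√(t² − 6t + 1) − t(1−t)/2 − (t/2)√(t² − 6t + 1). -/

import Mathlib

open Finset Filter Real
open scoped Classical

/-- `σ` contains the pattern `τ` (a permutation of `Fin k` given as a function). -/
def ContainsPattern {n k : ℕ} (σ : Equiv.Perm (Fin n)) (τ : Fin k → Fin k) : Prop :=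
  ∃ f : Fin k → Fin n, StrictMono f ∧ ∀ a b : Fin k, τ a < τ b ↔ σ (f a) < σ (f b)

/-- A permutation is separable iff it avoids the patterns 2413 and 3142. -/
def Separable {n : ℕ} (σ : Equiv.Perm (Fin n)) : Prop :=
  ¬ ContainsPattern σ (![1, 3, 0, 2] : Fin 4 → Fin 4) ∧
  ¬ ContainsPattern σ (![2, 0, 3, 1] : Fin 4 → Fin 4)

/-- The set of separable permutations of `[n]`. -/
noncomputable def SEP (n : ℕ) : Finset (Equiv.Perm (Fin n)) :=
  Finset.univ.filter fun σ => Separable σ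

/-- `IsAltSeq σ s l` : `l` is a strictly increasing list of indices along which the values of `σ`
alternate, starting with an ascent if `s = true` and starting with a descent if `s = false`. -/
def IsAltSeq {n : ℕ} (σ : Equiv.Perm (Fin n)) (s : Bool) (l : List (Fin n)) : Prop :=
  l.Chain' (· < ·) ∧
  ∀ j : ℕ, ∀ hj : j + 1 < l.length,
    if decide (j % 2 = 0) = s then
      σ (l.get ⟨j, Nat.lt_of_succ_lt hj⟩) < σ (l.get ⟨j + 1, hj⟩)
    else
      σ (l.get ⟨j + 1, hj⟩) < σ (l.get ⟨j, Nat.lt_of_succ_lt hj⟩)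

/-- The length of the longest alternating subsequence of `σ` of type `(s, e)`, where
`true` stands for ascent and `false` for descent.  An alternating subsequence starting with
an ascent ends with a descent iff its length is odd (and similarly in the other cases), so the
type is encoded by the parity constraint; a singleton counts as a subsequence of types
`(+,-)` and `(-,+)` but not of types `(+,+)` and `(-,-)`. -/
noncomputable def altTypeLen {n : ℕ} (σ : Equiv.Perm (Fin n)) (s e : Bool) : ℕ :=
  sSup {k | ∃ l : List (Fin n), IsAltSeq σ s l ∧ l.length = k ∧
    k % 2 = (if s = e then 0 else 1)}

/-- The length `Aₙ(σ)` of the longest alternating subsequence of `σ`. -/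
noncomputable def altLen {n : ℕ} (σ : Equiv.Perm (Fin n)) : ℕ :=
  sSup {k | ∃ l : List (Fin n), (IsAltSeq σ true l ∨ IsAltSeq σ false l) ∧
    l.length = k ∧ 1 ≤ k}

/-- Expectation with respect to the uniform probability measure on `SEP n`. -/
noncomputable def sepExp (n : ℕ) (f : Equiv.Perm (Fin n) → ℝ) : ℝ :=
  (∑ σ ∈ SEP n, f σ) / (SEP n).card

/-- Variance with respect to the uniform probability measure on `SEP n`. -/
noncomputable def sepVar (n : ℕ) (f : Equiv.Perm (Fin n) → ℝ) : ℝ :=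
  sepExp n (fun σ => (f σ - sepExp n f) ^ 2)

/-- `B₁^{+,n}(σ)`: the length of the first indecomposable block (0-indexed positions). -/
noncomputable def Bplus {n : ℕ} (σ : Equiv.Perm (Fin n)) : ℕ :=
  sInf {j | 1 ≤ j ∧ ∀ i : Fin n, (i : ℕ) < j → (σ i : ℕ) < j}

/-- `B₁^{-,n}(σ)`: the length of the first skew indecomposable block (0-indexed positions). -/
noncomputable def Bminus {n : ℕ} (σ : Equiv.Perm (Fin n)) : ℕ :=
  sInf {j | 1 ≤ j ∧ ∀ i : Fin n, (i : ℕ) < j → n - j ≤ (σ i : ℕ)}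

/-- Expectation over indecomposable separable permutations of `[n]`, i.e. the conditional
expectation under the uniform measure on `SEP n` given `{B₁^{+,n} = n}`. -/
noncomputable def indecExp (n : ℕ) (f : Equiv.Perm (Fin n) → ℝ) : ℝ :=
  (∑ σ ∈ (SEP n).filter (fun σ => Bplus σ = n), f σ) /
    ((SEP n).filter (fun σ => Bplus σ = n)).card
/-!
Call a *run* a maximal block of consecutive positions of descents. The turning points of a
permutation are the ends of its runs, so a longest alternating subsequence of type `(-,-)` picks
the two ends of every run and has twice as many entries as there are runs.

A separable permutation of size at least two is decomposable exactly when its complement is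
indecomposable. Complementing exchanges ascents and descents, which changes the number of runs only
through the two boundary positions, and a direct sum adds the numbers of runs. Splitting off the
first indecomposable block therefore gives linear equations between formal generating functions,
which determine the series `G` of the theorem in terms of the series `f` of separable permutations:
`(1 - X - 2f) G = X (f + X) (2 - X - f)` and `f = X + f² + X f`.

The discriminant of the second equation vanishes at `3 - 2√2`, where its double root `√2 - 1`
majorizes all partial sums of `f`. Hence both series converge absolutely for `|t| < 3 - 2√2`, and
`1 - t - 2 f(t)` is the positive square root of `t² - 6t + 1`.
-/

section Runs

/-- The index `i` is the first one of a maximal run of consecutive indices satisfying `D`. -/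
def IsRunStart (D : ℕ → Prop) (i : ℕ) : Prop :=
  D i ∧ ∀ j, i = j + 1 → ¬ D j

/-- The number of maximal runs of `D` starting below `n`. -/
noncomputable def runCount (D : ℕ → Prop) (n : ℕ) : ℕ :=
  Nat.count (IsRunStart D) n

variable {D : ℕ → Prop}

lemma runCount_zero (D : ℕ → Prop) : runCount D 0 = 0 :=
  Nat.count_zero _

lemma runCount_succ (D : ℕ → Prop) (n : ℕ) :
    runCount D (n + 1) = runCount D n + if IsRunStart D n then 1 else 0 :=
  Nat.count_succ _ _

lemma runCount_le (D : ℕ → Prop) (n : ℕ) : runCount D n ≤ n :=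
  Nat.count_le _

lemma runCount_mono (D : ℕ → Prop) : Monotone (runCount D) :=
  Nat.count_monotone _

lemma runCount_lt_runCount {a s b : ℕ} (hs : IsRunStart D s) (has : a ≤ s) (hsb : s < b) :
    runCount D a < runCount D b :=
  (runCount_mono D has).trans_lt (Nat.count_strict_mono hs hsb)

lemma exists_isRunStart_le {f : ℕ} (hf : D f) :
    ∃ s ≤ f, IsRunStart D s ∧ ∀ e < f, ¬ D e → e < s := by
  induction f with
  | zero => exact ⟨0, le_rfl, ⟨hf, by omega⟩, by omega⟩
  | succ f ih =>
    by_cases hD : D f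
    · obtain ⟨s, hsf, hs, hlt⟩ := ih hD
      refine ⟨s, by omega, hs, fun e he hne => hlt e ?_ hne⟩
      exact (Nat.lt_succ_iff_lt_or_eq.mp he).resolve_right fun h => hne (h ▸ hD)
    · refine ⟨f + 1, le_rfl, ⟨hf, fun j hj => ?_⟩, fun e he _ => he⟩
      rwa [← Nat.succ.inj hj]

lemma runCount_congr {D' : ℕ → Prop} {n : ℕ} (h : ∀ i < n, D i ↔ D' i) :
    runCount D n = runCount D' n := by
  induction n with
  | zero => rw [runCount_zero, runCount_zero]
  | succ n ih =>
    have hstart : IsRunStart D n ↔ IsRunStart D' n :=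
      and_congr (h n n.lt_succ_self) <| forall₂_congr fun j hj => not_congr (h j (by omega))
    rw [runCount_succ, runCount_succ, ih fun i hi => h i (by omega), if_congr hstart rfl rfl]

lemma runCount_add {k : ℕ} (hk : ∀ j, k = j + 1 → ¬ D j) (l : ℕ) :
    runCount D (k + l) = runCount D k + runCount (fun j => D (k + j)) l := by
  induction l with
  | zero => rw [runCount_zero, Nat.add_zero, Nat.add_zero]
  | succ l ih =>
    have hstart : IsRunStart D (k + l) ↔ IsRunStart (fun j => D (k + j)) l := by
      refine and_congr_right fun _ => ?_
      rcases l with - | l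
      · exact iff_of_true hk fun j hj => absurd hj j.succ_ne_zero.symm
      · simp [← Nat.add_assoc]
    rw [← Nat.add_assoc, runCount_succ, runCount_succ, ih, Nat.add_assoc, if_congr hstart rfl rfl]

/-- Runs of `D` and of its complement alternate. -/
lemma runCount_not_add (D : ℕ → Prop) (m : ℕ) :
    runCount (fun i => ¬ D i) (m + 1) + (if D 0 then 1 else 0) + (if D m then 1 else 0) =
      runCount D (m + 1) + 1 := by
  induction m with
  | zero => by_cases h : D 0 <;> simp [runCount_succ, runCount_zero, IsRunStart, h]
  | succ m ih =>
    rw [runCount_succ _ (m + 1), runCount_succ D (m + 1)]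
    by_cases h : D m <;> by_cases h' : D (m + 1) <;> simp [IsRunStart, h, h'] at ih ⊢ <;> omega

end Runs

section Zigzag

variable {α : Type*} [LinearOrder α]

/-- The sequence `v` has a descent at position `i`. -/
def IsDescent (v : ℕ → α) (i : ℕ) : Prop :=
  v (i + 1) < v i

/-- `Zigzag v m e`: the sequence `v` has an alternating subsequence beginning and ending with a
descent, with `m + 1` descents in total, whose last entry is at position `e`. -/
inductive Zigzag (v : ℕ → α) : ℕ → ℕ → Prop
  | single {i j : ℕ} (hij : i < j) (hv : v j < v i) : Zigzag v 0 j
  | step {m e i j : ℕ} (h : Zigzag v m e) (hei : e < i) (hij : i < j) (hup : v e < v i)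
      (hdown : v j < v i) : Zigzag v (m + 1) j

variable {v : ℕ → α}

lemma Zigzag.lower_last {m e e' : ℕ} (h : Zigzag v m e) (he : e < e') (hv : v e' < v e) :
    Zigzag v m e' := by
  cases h with
  | single hij hdown => exact .single (hij.trans he) (hv.trans hdown)
  | step h hei hij hup hdown => exact .step h hei (hij.trans he) hup (hv.trans hdown)

lemma le_of_forall_not_isDescent {i j : ℕ} (hij : i ≤ j)
    (h : ∀ f, i ≤ f → f < j → ¬ IsDescent v f) : v i ≤ v j := by
  induction j, hij using Nat.le_induction with
  | base => exact le_rfl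
  | succ j hij ih =>
    exact (ih fun f hf hfj => h f hf (by omega)).trans (not_lt.mp (h j hij j.lt_succ_self))

lemma exists_isDescent_of_lt {i j : ℕ} (hij : i ≤ j) (hv : v j < v i) :
    ∃ f, i ≤ f ∧ f < j ∧ IsDescent v f := by
  by_contra! h
  exact hv.not_ge (le_of_forall_not_isDescent hij h)

lemma exists_not_isDescent_of_lt {i j : ℕ} (hij : i ≤ j) (hv : v i < v j) :
    ∃ f, i ≤ f ∧ f < j ∧ ¬ IsDescent v f := by
  obtain ⟨f, hif, hfj, hf⟩ := exists_isDescent_of_lt (v := OrderDual.toDual ∘ v) hij hv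
  exact ⟨f, hif, hfj, fun h => lt_asymm h hf⟩

lemma Zigzag.lt_runCount {m e : ℕ} (h : Zigzag v m e) : m < runCount (IsDescent v) e := by
  induction h with
  | single hij hv =>
    obtain ⟨f, -, hfj, hf⟩ := exists_isDescent_of_lt hij.le hv
    obtain ⟨s, hsf, hs, -⟩ := exists_isRunStart_le hf
    exact (Nat.zero_le _).trans_lt (runCount_lt_runCount hs le_rfl (hsf.trans_lt hfj))
  | step _ hei hij hup hdown ih =>
    obtain ⟨g, heg, hgi, hg⟩ := exists_not_isDescent_of_lt hei.le hup
    obtain ⟨f, hif, hfj, hf⟩ := exists_isDescent_of_lt hij.le hdown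
    obtain ⟨s, hsf, hs, hlt⟩ := exists_isRunStart_le hf
    have hgs : g < s := hlt g (by omega) hg
    have := runCount_lt_runCount hs (heg.trans hgs.le) (hsf.trans_lt hfj)
    omega

/-- Taking the top and the bottom of every descending run gives a longest zigzag. -/
lemma exists_zigzag_of_runCount_eq (hv : Function.Injective v) (x : ℕ) :
    ∀ m, runCount (IsDescent v) x = m + 1 → ∃ e ≤ x, Zigzag v m e ∧ v e ≤ v x ∧
      (e = x ↔ ∃ y, x = y + 1 ∧ IsDescent v y) := by
  induction x with
  | zero => simp [runCount_zero]
  | succ x ih =>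
    intro m hm
    rw [runCount_succ] at hm
    by_cases hx : IsDescent v x
    · refine ⟨x + 1, le_rfl, ?_, le_rfl, iff_of_true rfl ⟨x, rfl, hx⟩⟩
      by_cases hstart : IsRunStart (IsDescent v) x
      · rw [if_pos hstart, Nat.add_right_cancel_iff] at hm
        rcases m with - | m
        · exact .single x.lt_succ_self hx
        · obtain ⟨e, hex, hz, hve, hiff⟩ := ih m hm
          have hne : e ≠ x := fun h => by
            obtain ⟨y, hy, hD⟩ := hiff.mp h
            exact hstart.2 y hy hD
          exact .step hz (lt_of_le_of_ne hex hne) x.lt_succ_self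
            (lt_of_le_of_ne hve (hv.ne hne)) hx
      · rw [if_neg hstart] at hm
        obtain ⟨e, -, hz, -, hiff⟩ := ih m hm
        have hprev : ∃ y, x = y + 1 ∧ IsDescent v y := by
          simpa [IsRunStart, hx] using hstart
        obtain rfl := hiff.mpr hprev
        exact hz.lower_last e.lt_succ_self hx
    · rw [if_neg fun h => hx h.1] at hm
      obtain ⟨e, hex, hz, hve, -⟩ := ih m hm
      refine ⟨e, by omega, hz, hve.trans (not_lt.mp hx), iff_of_false (by omega) ?_⟩
      rintro ⟨y, hy, hD⟩
      exact hx (Nat.succ.inj hy ▸ hD)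

end Zigzag

section NatPerm

variable {n : ℕ}

/-- The permutation of `ℕ` that agrees with `σ` below `n` and fixes every index from `n` on, so that
positions and values can be handled as natural numbers without bounds. -/
noncomputable def natPerm (σ : Equiv.Perm (Fin n)) : Equiv.Perm ℕ :=
  σ.viaEmbedding Fin.valEmbedding

lemma natPerm_val (σ : Equiv.Perm (Fin n)) (i : Fin n) : natPerm σ i = σ i :=
  σ.viaEmbedding_apply Fin.valEmbedding i

lemma natPerm_of_lt (σ : Equiv.Perm (Fin n)) {i : ℕ} (hi : i < n) :
    natPerm σ i = σ ⟨i, hi⟩ :=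
  natPerm_val σ ⟨i, hi⟩

lemma natPerm_of_le (σ : Equiv.Perm (Fin n)) {i : ℕ} (hi : n ≤ i) : natPerm σ i = i :=
  σ.viaEmbedding_apply_of_notMem Fin.valEmbedding i (by simpa using hi)

lemma natPerm_lt (σ : Equiv.Perm (Fin n)) {i : ℕ} (hi : i < n) : natPerm σ i < n := by
  rw [natPerm_of_lt σ hi]
  exact Fin.is_lt _

lemma le_natPerm (σ : Equiv.Perm (Fin n)) {i : ℕ} (hi : n ≤ i) : n ≤ natPerm σ i := by
  rwa [natPerm_of_le σ hi]

lemma succ_lt_of_isDescent_natPerm {σ : Equiv.Perm (Fin n)} {i : ℕ}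
    (h : IsDescent (natPerm σ) i) : i + 1 < n := by
  by_contra! hn
  have hval : natPerm σ (i + 1) < natPerm σ i := h
  rw [natPerm_of_le σ hn] at hval
  rcases hn.eq_or_lt with rfl | hlt
  · exact (natPerm_lt σ i.lt_succ_self).not_gt hval
  · rw [natPerm_of_le σ (by omega)] at hval
    omega

end NatPerm

section AltSeq

variable {n : ℕ} {σ : Equiv.Perm (Fin n)}

lemma isAltSeq_false_iff {l : List (Fin n)} :
    IsAltSeq σ false l ↔ (∀ j, ∀ hj : j + 1 < l.length, l[j] < l[j + 1]) ∧
      ∀ j, ∀ hj : j + 1 < l.length,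
        if j % 2 = 0 then σ l[j + 1] < σ l[j] else σ l[j] < σ l[j + 1] := by
  refine and_congr List.isChain_iff_getElem (forall₂_congr fun j hj => ?_)
  by_cases h : j % 2 = 0 <;> simp [h]

lemma IsAltSeq.zigzag {l : List (Fin n)} (h : IsAltSeq σ false l) :
    ∀ m, ∀ hm : 2 * m + 1 < l.length, Zigzag (natPerm σ) m (l[2 * m + 1] : Fin n) := by
  obtain ⟨hlt, halt⟩ := isAltSeq_false_iff.mp h
  simp only [← Fin.val_fin_lt (n := n), ← natPerm_val] at hlt halt
  have hdrop : ∀ (k : ℕ) (hk : 2 * k + 1 < l.length),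
      natPerm σ (l[2 * k + 1] : Fin n) < natPerm σ (l[2 * k] : Fin n) := fun k hk => by
    simpa using halt (2 * k) hk
  intro m
  induction m with
  | zero => exact fun hm => .single (hlt 0 hm) (hdrop 0 hm)
  | succ m ih =>
    intro hm
    have hrise : natPerm σ (l[2 * m + 1] : Fin n) < natPerm σ (l[2 * (m + 1)] : Fin n) := by
      have := halt (2 * m + 1) (by omega)
      rwa [if_neg (by omega)] at this
    exact .step (ih (by omega)) (hlt (2 * m + 1) (by omega)) (hlt (2 * (m + 1)) hm) hrise
      (hdrop (m + 1) hm)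

lemma IsAltSeq.append {l : List (Fin n)} {m : ℕ} (h : IsAltSeq σ false l)
    (hl : l.length = 2 * m) {i j : Fin n} (hlast : ∀ e ∈ l.getLast?, e < i ∧ σ e < σ i)
    (hij : i < j) (hdown : σ j < σ i) :
    IsAltSeq σ false (l ++ [i, j]) := by
  obtain ⟨hlt, halt⟩ := isAltSeq_false_iff.mp h
  have hlast : ∀ k (hk : k + 1 = 2 * m), l[k] < i ∧ σ l[k] < σ i := fun k hk =>
    hlast _ (by simp [List.getLast?_eq_getElem?, hl, ← hk])
  refine isAltSeq_false_iff.mpr ?_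
  rw [← forall₂_and]
  intro k hk
  have hcases : k + 1 < 2 * m ∨ k + 1 = 2 * m ∨ k = 2 * m := by
    simp only [List.length_append, List.length_cons, List.length_nil] at hk
    omega
  rcases hcases with hk' | hk' | rfl
  · have h1 := hlt k (by omega)
    have h2 := halt k (by omega)
    simpa [hl, hk', (Nat.lt_succ_self k).trans hk'] using ⟨h1, h2⟩
  · have h1 := hlast k hk'
    have : k % 2 = 1 := by omega
    simpa [List.getElem_append, hl, hk', (Nat.lt_succ_self k).trans_eq hk', this] using h1
  · simpa [List.getElem_append, hl] using ⟨hij, hdown⟩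

lemma Zigzag.exists_isAltSeq {m e : ℕ} (h : Zigzag (natPerm σ) m e) (he : e < n) :
    ∃ l, IsAltSeq σ false l ∧ l.length = 2 * (m + 1) ∧ l.getLast? = some ⟨e, he⟩ := by
  induction h with
  | @single i j hij hv =>
    refine ⟨[] ++ [⟨i, hij.trans he⟩, ⟨j, he⟩], ?_, rfl, rfl⟩
    refine IsAltSeq.append (m := 0) (isAltSeq_false_iff.mpr (by simp)) rfl (by simp) hij ?_
    rwa [natPerm_of_lt σ he, natPerm_of_lt σ (hij.trans he)] at hv
  | @step m e i j _ hei hij hup hdown ih =>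
    have hi : i < n := hij.trans he
    have hen : e < n := hei.trans hi
    obtain ⟨l, hl, hlen, hlast⟩ := ih hen
    rw [natPerm_of_lt σ hi] at hup hdown
    rw [natPerm_of_lt σ hen] at hup
    rw [natPerm_of_lt σ he] at hdown
    refine ⟨l ++ [⟨i, hi⟩, ⟨j, he⟩], hl.append hlen ?_ hij hdown, ?_, by simp⟩
    · rw [hlast]
      rintro _ ⟨⟩
      exact ⟨hei, hup⟩
    · rw [List.length_append, hlen]
      rfl

/-- The number of maximal descending runs of `σ`. -/
noncomputable def descRuns (σ : Equiv.Perm (Fin n)) : ℕ :=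
  runCount (IsDescent (natPerm σ)) n

lemma exists_isAltSeq_length_eq (σ : Equiv.Perm (Fin n)) :
    ∃ l, IsAltSeq σ false l ∧ l.length = 2 * descRuns σ := by
  rcases hm : descRuns σ with - | m
  · exact ⟨[], isAltSeq_false_iff.mpr (by simp), rfl⟩
  · obtain ⟨e, hen, hz, -, hiff⟩ := exists_zigzag_of_runCount_eq (natPerm σ).injective n m hm
    have hne : e ≠ n := fun h => by
      obtain ⟨y, rfl, hy⟩ := hiff.mp h
      exact (succ_lt_of_isDescent_natPerm hy).false
    obtain ⟨l, hl, hlen, -⟩ := hz.exists_isAltSeq (lt_of_le_of_ne hen hne)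
    exact ⟨l, hl, hlen⟩

theorem altTypeLen_false_false (σ : Equiv.Perm (Fin n)) :
    altTypeLen σ false false = 2 * descRuns σ := by
  refine IsGreatest.csSup_eq ⟨?_, ?_⟩
  · obtain ⟨l, hl, hlen⟩ := exists_isAltSeq_length_eq σ
    exact ⟨l, hl, hlen, by simp⟩
  · rintro _ ⟨l, hl, rfl, heven⟩
    rw [if_pos rfl] at heven
    rcases hm : l.length / 2 with - | m
    · omega
    · have hz := hl.zigzag m (by omega)
      have hlt := hz.lt_runCount.trans_le (runCount_mono _ (Fin.is_lt _).le)
      unfold descRuns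
      omega

end AltSeq

section Decomposition

variable {α β : Type*} [LinearOrder α] [LinearOrder β]

/-- Four values, in this order, form one of the patterns 2413 and 3142. Treating both patterns at
once makes the notion invariant under order reversal. -/
def IsSimpleQuadruple (w x y z : α) : Prop :=
  (y < w ∧ w < z ∧ z < x) ∨ (x < z ∧ z < w ∧ w < y)

/-- The sequence `v 0, …, v (n - 1)` avoids both patterns 2413 and 3142. -/
def IsSeparableSeq (v : ℕ → α) (n : ℕ) : Prop :=
  ∀ a b c d, a < b → b < c → c < d → d < n → ¬ IsSimpleQuadruple (v a) (v b) (v c) (v d)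

/-- A cut of `v 0, …, v (n - 1)` at `j`: everything before `j` is smaller than everything after.
Skew cuts are the cuts of the order dual sequence. -/
def IsCut (v : ℕ → α) (n j : ℕ) : Prop :=
  0 < j ∧ j < n ∧ ∀ a < j, ∀ b, j ≤ b → b < n → v a < v b

variable {v : ℕ → α} {w : ℕ → β} {n m j : ℕ}

lemma IsSeparableSeq.mono (h : IsSeparableSeq v n) (hmn : m ≤ n) : IsSeparableSeq v m :=
  fun a b c d hab hbc hcd hd => h a b c d hab hbc hcd (hd.trans_le hmn)

lemma IsSeparableSeq.of_reverse (h : IsSeparableSeq v n)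
    (hvw : ∀ i < n, ∀ j < n, w i < w j ↔ v j < v i) : IsSeparableSeq w n := by
  intro a b c d hab hbc hcd hd
  have hc := hcd.trans hd
  have hb := hbc.trans hc
  have ha := hab.trans hb
  unfold IsSimpleQuadruple
  rw [hvw c hc a ha, hvw a ha d hd, hvw d hd b hb, hvw b hb d hd, hvw d hd a ha, hvw a ha c hc]
  exact fun hw => h a b c d hab hbc hcd hd (by unfold IsSimpleQuadruple; tauto)

lemma isCut_iff_of_reverse (hvw : ∀ i < n, ∀ j < n, w i < w j ↔ v j < v i) :
    IsCut w n j ↔ IsCut (OrderDual.toDual ∘ v) n j := by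
  refine and_congr_right fun _ => and_congr_right fun hj => ?_
  exact forall₂_congr fun a ha => forall₃_congr fun b _ hb => hvw a (ha.trans hj) b hb

lemma IsCut.succ (h : IsCut v m j) (hlt : ∀ a < j, v a < v m) : IsCut v (m + 1) j := by
  refine ⟨h.1, h.2.1.trans m.lt_succ_self, fun a ha b hjb hb => ?_⟩
  rcases Nat.lt_succ_iff_lt_or_eq.mp hb with hbm | rfl
  · exact h.2.2 a ha b hjb hbm
  · exact hlt a ha

lemma IsCut.lt_of_forall_lt (h : IsCut v m j) (hgt : ∀ a < j, v m < v a) {a : ℕ} (ha : a < m) :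
    v m < v a := by
  rcases lt_or_ge a j with haj | hja
  · exact hgt a haj
  · exact (hgt 0 h.1).trans (h.2.2 0 h.1 a hja ha)

lemma isCut_last (hm : 0 < m) (hlt : ∀ a < m, v a < v m) : IsCut v (m + 1) m := by
  refine ⟨hm, m.lt_succ_self, fun a ha b hmb hb => ?_⟩
  rw [Nat.le_antisymm (Nat.le_of_lt_succ hb) hmb]
  exact hlt a ha

/-- If the first block of a cut has a skew cut, then a new last value strictly inside the range of
this block creates the pattern 3142. -/
lemma IsSeparableSeq.not_isCut_toDual (hv : IsSeparableSeq v (m + 1)) (hj : IsCut v m j)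
    {p q i : ℕ} (hp : p < j) (hpm : v m < v p) (hq : q < j) (hqm : v q < v m) :
    ¬ IsCut (OrderDual.toDual ∘ v) j i := by
  rintro ⟨hi0, hij, hi⟩
  replace hi : ∀ a < i, ∀ b, i ≤ b → b < j → v b < v a := hi
  obtain ⟨a, hai, ham⟩ : ∃ a < i, v m < v a := by
    rcases lt_or_ge p i with hpi | hip
    · exact ⟨p, hpi, hpm⟩
    · exact ⟨0, hi0, hpm.trans (hi 0 hi0 p hip hp)⟩
  obtain ⟨b, hib, hbj, hbm⟩ : ∃ b, i ≤ b ∧ b < j ∧ v b < v m := by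
    rcases lt_or_ge q i with hqi | hiq
    · exact ⟨i, le_rfl, hij, (hi q hqi i le_rfl hij).trans hqm⟩
    · exact ⟨q, hiq, hq, hqm⟩
  have haj : v a < v j := hj.2.2 a (hai.trans hij) j le_rfl hj.2.1
  exact hv a b j m (by omega) hbj hj.2.1 m.lt_succ_self (.inr ⟨hbm, ham, haj⟩)

lemma exists_isCut_succ (hv : IsSeparableSeq v (m + 1)) (hne : ∀ i < m, v i ≠ v m)
    (ih : ∀ j ≤ m, 2 ≤ j → ∃ i, IsCut v j i ∨ IsCut (OrderDual.toDual ∘ v) j i)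
    (hcut : ∃ j, IsCut v m j) :
    ∃ i, IsCut v (m + 1) i ∨ IsCut (OrderDual.toDual ∘ v) (m + 1) i := by
  obtain ⟨hj, hmin⟩ := And.intro (Nat.find_spec hcut) fun i => Nat.find_min hcut (m := i)
  generalize Nat.find hcut = j at hj hmin
  have hjm := hj.2.1
  by_cases habove : ∀ a < j, v a < v m
  · exact ⟨j, .inl (hj.succ habove)⟩
  by_cases hbelow : ∀ a < j, v m < v a
  · exact ⟨m, .inr (isCut_last (hj.1.trans hjm) fun a => hj.lt_of_forall_lt hbelow)⟩
  push Not at habove hbelow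
  obtain ⟨p, hp, hpm⟩ := habove
  obtain ⟨q, hq, hqm⟩ := hbelow
  replace hpm := lt_of_le_of_ne hpm (hne p (hp.trans hjm)).symm
  replace hqm := lt_of_le_of_ne hqm (hne q (hq.trans hjm))
  have hpq : p ≠ q := fun h => lt_asymm hpm (h ▸ hqm)
  obtain ⟨i, ⟨hi0, hij, hi⟩ | hi⟩ := ih j hjm.le (by omega)
  · refine absurd ⟨hi0, hij.trans hjm, fun a ha b hib hb => ?_⟩ (hmin i hij)
    rcases lt_or_ge b j with hbj | hjb
    · exact hi a ha b hib hbj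
    · exact hj.2.2 a (ha.trans hij) b hjb hb
  · exact absurd hi (hv.not_isCut_toDual hj hp hpm hq hqm)

theorem IsSeparableSeq.exists_isCut (hv : IsSeparableSeq v n) (hn : 2 ≤ n)
    (hinj : Set.InjOn v (Set.Iio n)) :
    ∃ i, IsCut v n i ∨ IsCut (OrderDual.toDual ∘ v) n i := by
  induction n using Nat.strong_induction_on with
  | _ n ih =>
    obtain ⟨m, rfl⟩ : ∃ m, n = m + 1 := ⟨n - 1, by omega⟩
    replace ih : ∀ j ≤ m, 2 ≤ j → ∃ i, IsCut v j i ∨ IsCut (OrderDual.toDual ∘ v) j i :=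
      fun j hj h2 => ih j (by omega) (hv.mono (by omega)) h2
        (hinj.mono (Set.Iio_subset_Iio (by omega)))
    have hne : ∀ i < m, v i ≠ v m := fun i hi =>
      hinj.ne (Set.mem_Iio.mpr (by omega)) (Set.mem_Iio.mpr m.lt_succ_self) hi.ne
    rcases Nat.lt_or_ge m 2 with hm | hm
    · obtain rfl : m = 1 := by omega
      refine ⟨1, (hne 0 one_pos).lt_or_gt.imp (fun h => ?_) fun h => ?_⟩ <;>
      exact isCut_last one_pos fun a ha => Nat.lt_one_iff.mp ha ▸ h
    · obtain ⟨i, hi | hi⟩ := ih m le_rfl hm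
      · exact exists_isCut_succ hv hne ih ⟨i, hi⟩
      · have hdual := exists_isCut_succ (v := OrderDual.toDual ∘ v)
          (hv.of_reverse fun _ _ _ _ => Iff.rfl) hne
          (fun j hj h2 => (ih j hj h2).imp fun _ => Or.symm) ⟨i, hi⟩
        exact hdual.imp fun _ => Or.symm

end Decomposition

section Separable

variable {n : ℕ} {σ : Equiv.Perm (Fin n)}

lemma containsPattern_four_iff {τ : Fin 4 → Fin 4} {R : ℕ → ℕ → ℕ → ℕ → Prop}
    (hR : ∀ u : Fin 4 → ℕ, (∀ i j, τ i < τ j ↔ u i < u j) ↔ R (u 0) (u 1) (u 2) (u 3)) :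
    ContainsPattern σ τ ↔ ∃ a b c d, a < b ∧ b < c ∧ c < d ∧ d < n ∧
      R (natPerm σ a) (natPerm σ b) (natPerm σ c) (natPerm σ d) := by
  constructor
  · rintro ⟨f, hf, h⟩
    refine ⟨f 0, f 1, f 2, f 3, hf (by decide), hf (by decide), hf (by decide), (f 3).isLt, ?_⟩
    refine (hR fun i => natPerm σ (f i)).mp fun i j => ?_
    rw [h, natPerm_val, natPerm_val, Fin.lt_def]
  · rintro ⟨a, b, c, d, hab, hbc, hcd, hd, h⟩
    refine ⟨![⟨a, by omega⟩, ⟨b, by omega⟩, ⟨c, by omega⟩, ⟨d, hd⟩], ?_, fun i j => ?_⟩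
    · refine Fin.strictMono_iff_lt_succ.mpr fun i => ?_
      fin_cases i <;> assumption
    · rw [(hR (natPerm σ ∘ ![a, b, c, d])).mpr h, Fin.lt_def, ← natPerm_val, ← natPerm_val]
      fin_cases i <;> fin_cases j <;> rfl

lemma separable_iff : Separable σ ↔ IsSeparableSeq (natPerm σ) n := by
  have h2413 := containsPattern_four_iff (σ := σ) (τ := ![1, 3, 0, 2])
    (R := fun w x y z => y < w ∧ w < z ∧ z < x) fun u => by
      refine ⟨fun h => ⟨(h 2 0).1 (by decide), (h 0 3).1 (by decide), (h 3 1).1 (by decide)⟩, ?_⟩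
      rintro ⟨h₁, h₂, h₃⟩ i j
      fin_cases i <;> fin_cases j <;> simp <;> omega
  have h3142 := containsPattern_four_iff (σ := σ) (τ := ![2, 0, 3, 1])
    (R := fun w x y z => x < z ∧ z < w ∧ w < y) fun u => by
      refine ⟨fun h => ⟨(h 1 3).1 (by decide), (h 3 0).1 (by decide), (h 0 2).1 (by decide)⟩, ?_⟩
      rintro ⟨h₁, h₂, h₃⟩ i j
      fin_cases i <;> fin_cases j <;> simp <;> omega
  rw [Separable, h2413, h3142]
  constructor
  · rintro ⟨h, h'⟩ a b c d hab hbc hcd hd (hq | hq)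
    · exact h ⟨a, b, c, d, hab, hbc, hcd, hd, hq⟩
    · exact h' ⟨a, b, c, d, hab, hbc, hcd, hd, hq⟩
  · refine fun h => ⟨?_, ?_⟩ <;> rintro ⟨a, b, c, d, hab, hbc, hcd, hd, hq⟩
    · exact h a b c d hab hbc hcd hd (.inl hq)
    · exact h a b c d hab hbc hcd hd (.inr hq)

end Separable

section Bplus

variable {n : ℕ} {σ : Equiv.Perm (Fin n)} {j : ℕ}

lemma mapsTo_natPerm_iff :
    Set.MapsTo (natPerm σ) (Set.Iio j) (Set.Iio j) ↔ ∀ i : Fin n, (i : ℕ) < j → (σ i : ℕ) < j := by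
  refine ⟨fun h i hi => natPerm_val σ i ▸ h hi, fun h i hi => ?_⟩
  rcases lt_or_ge i n with hin | hni
  · rw [Set.mem_Iio, natPerm_of_lt σ hin]
    exact h ⟨i, hin⟩ hi
  · rwa [natPerm_of_le σ hni]

lemma mapsTo_natPerm_self (σ : Equiv.Perm (Fin n)) :
    Set.MapsTo (natPerm σ) (Set.Iio n) (Set.Iio n) :=
  fun _ => natPerm_lt σ

lemma isLeast_Bplus (σ : Equiv.Perm (Fin n)) :
    IsLeast {j | 1 ≤ j ∧ Set.MapsTo (natPerm σ) (Set.Iio j) (Set.Iio j)} (Bplus σ) := by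
  simp only [mapsTo_natPerm_iff]
  exact isLeast_csInf ⟨n + 1, by omega, fun i _ => by omega⟩

lemma Bplus_le (hn : 0 < n) (σ : Equiv.Perm (Fin n)) : Bplus σ ≤ n :=
  (isLeast_Bplus σ).2 ⟨hn, mapsTo_natPerm_self σ⟩

lemma Bplus_eq_iff : Bplus σ = j ↔ (1 ≤ j ∧ Set.MapsTo (natPerm σ) (Set.Iio j) (Set.Iio j)) ∧
    ∀ i < j, 1 ≤ i → ¬ Set.MapsTo (natPerm σ) (Set.Iio i) (Set.Iio i) := by
  constructor
  · rintro rfl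
    exact ⟨(isLeast_Bplus σ).1, fun i hi h1 hmap => hi.not_ge ((isLeast_Bplus σ).2 ⟨h1, hmap⟩)⟩
  · rintro ⟨hj, hmin⟩
    refine ((isLeast_Bplus σ).2 hj).eq_of_not_lt fun hlt => ?_
    exact hmin _ hlt (isLeast_Bplus σ).1.1 (isLeast_Bplus σ).1.2

lemma isCut_natPerm_iff : IsCut (natPerm σ) n j ↔
    0 < j ∧ j < n ∧ Set.MapsTo (natPerm σ) (Set.Iio j) (Set.Iio j) := by
  refine and_congr_right fun _ => and_congr_right fun hjn =>
    ⟨fun h a ha => ?_, fun h a ha b hb _ => ?_⟩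
  · have haj : a < j := ha
    have hmem : ∀ x ∈ Finset.range (natPerm σ a + 1), (natPerm σ).symm x ∈ Finset.range j := by
      intro x hx
      obtain ⟨b, rfl⟩ := (natPerm σ).surjective x
      rw [Finset.mem_range, Nat.lt_succ_iff] at hx
      rw [Equiv.symm_apply_apply, Finset.mem_range]
      by_contra! hjb
      have hbn : b < n := by
        by_contra! hnb
        exact ((le_natPerm σ hnb).trans hx).not_gt (natPerm_lt σ (haj.trans hjn))
      exact (h a haj b hjb hbn).not_ge hx
    have hcard := Finset.card_le_card_of_injOn _ hmem (natPerm σ).symm.injective.injOn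
    rwa [Finset.card_range, Finset.card_range] at hcard
  · have hb' : j ≤ natPerm σ b := by
      by_contra! hlt
      have hsymm := Equiv.Perm.perm_symm_mapsTo_of_mapsTo _ h hlt
      rw [Equiv.symm_apply_apply] at hsymm
      exact hb.not_gt hsymm
    exact (Set.mem_Iio.mp (h ha)).trans_le hb'

lemma Bplus_ne_iff (hn : 0 < n) : Bplus σ ≠ n ↔ ∃ j, IsCut (natPerm σ) n j := by
  simp only [isCut_natPerm_iff]
  constructor
  · exact fun hne => ⟨Bplus σ, (isLeast_Bplus σ).1.1, lt_of_le_of_ne (Bplus_le hn σ) hne,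
      (isLeast_Bplus σ).1.2⟩
  · rintro ⟨j, hj, hjn, hmap⟩
    exact (((isLeast_Bplus σ).2 ⟨hj, hmap⟩).trans_lt hjn).ne

end Bplus

section ComplPerm

variable {n : ℕ}

/-- The complement of `σ`, with the order of the values reversed. -/
def complPerm (σ : Equiv.Perm (Fin n)) : Equiv.Perm (Fin n) :=
  σ.trans Fin.revPerm

lemma complPerm_involutive : Function.Involutive (complPerm (n := n)) :=
  fun σ => Equiv.ext fun i => Fin.rev_rev (σ i)

lemma natPerm_complPerm_lt_iff (σ : Equiv.Perm (Fin n)) :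
    ∀ i < n, ∀ j < n,
      natPerm (complPerm σ) i < natPerm (complPerm σ) j ↔ natPerm σ j < natPerm σ i := by
  intro i hi j hj
  simp only [natPerm_of_lt _ hi, natPerm_of_lt _ hj, Fin.val_fin_lt]
  exact Fin.rev_lt_rev

lemma separable_complPerm {σ : Equiv.Perm (Fin n)} (h : Separable σ) : Separable (complPerm σ) :=
  separable_iff.mpr ((separable_iff.mp h).of_reverse (natPerm_complPerm_lt_iff σ))

lemma Bplus_complPerm (hn : 2 ≤ n) {σ : Equiv.Perm (Fin n)} (h : Separable σ) :
    Bplus (complPerm σ) = n ↔ Bplus σ ≠ n := by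
  have hn0 : 0 < n := by omega
  rw [← not_iff_not, ← Ne, Bplus_ne_iff hn0, Bplus_ne_iff hn0, not_exists]
  simp only [isCut_iff_of_reverse (natPerm_complPerm_lt_iff σ)]
  constructor
  · rintro ⟨i, hi0, hin, hi⟩ j ⟨hj0, hjn, hj⟩
    exact lt_asymm (hj 0 hj0 (n - 1) (by omega) (by omega))
      (hi 0 hi0 (n - 1) (by omega) (by omega))
  · intro hcut
    obtain ⟨i, hi⟩ := (separable_iff.mp h).exists_isCut hn (natPerm σ).injective.injOn
    exact ⟨i, hi.resolve_left (hcut i)⟩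

end ComplPerm

section DirectSum

variable {k l : ℕ}

/-- The direct sum of `τ` and `ρ`: the permutation `τ` on the first `k` indices, followed by `ρ`
shifted by `k`. -/
def dsum (τ : Equiv.Perm (Fin k)) (ρ : Equiv.Perm (Fin l)) : Equiv.Perm (Fin (k + l)) :=
  finSumFinEquiv.permCongr (Equiv.Perm.sumCongr τ ρ)

lemma dsum_injective :
    Function.Injective fun p : Equiv.Perm (Fin k) × Equiv.Perm (Fin l) => dsum p.1 p.2 :=
  finSumFinEquiv.permCongr.injective.comp Equiv.Perm.sumCongrHom_injective

variable (τ : Equiv.Perm (Fin k)) (ρ : Equiv.Perm (Fin l))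

lemma dsum_castAdd (i : Fin k) : dsum τ ρ (Fin.castAdd l i) = Fin.castAdd l (τ i) := by
  simp [dsum]

lemma dsum_natAdd (j : Fin l) : dsum τ ρ (Fin.natAdd k j) = Fin.natAdd k (ρ j) := by
  simp [dsum]

lemma natPerm_dsum_left {i : ℕ} (hi : i < k) : natPerm (dsum τ ρ) i = natPerm τ i := by
  rw [natPerm_of_lt τ hi, natPerm_of_lt _ (hi.trans_le (k.le_add_right l))]
  exact congrArg Fin.val (dsum_castAdd τ ρ ⟨i, hi⟩)

lemma natPerm_dsum_right (j : ℕ) : natPerm (dsum τ ρ) (k + j) = k + natPerm ρ j := by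
  rcases lt_or_ge j l with hj | hj
  · rw [natPerm_of_lt ρ hj, natPerm_of_lt _ (Nat.add_lt_add_left hj k)]
    exact congrArg Fin.val (dsum_natAdd τ ρ ⟨j, hj⟩)
  · rw [natPerm_of_le ρ hj, natPerm_of_le _ (Nat.add_le_add_left hj k)]

lemma natPerm_dsum_lt {i : ℕ} (hi : i < k) : natPerm (dsum τ ρ) i < k :=
  (natPerm_dsum_left τ ρ hi).trans_lt (natPerm_lt τ hi)

lemma le_natPerm_dsum {i : ℕ} (hi : k ≤ i) : k ≤ natPerm (dsum τ ρ) i := by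
  obtain ⟨j, rfl⟩ := Nat.exists_eq_add_of_le hi
  exact natPerm_dsum_right τ ρ j ▸ Nat.le_add_right _ _

lemma isSimpleQuadruple_add_left_iff {w x y z : ℕ} :
    IsSimpleQuadruple (k + w) (k + x) (k + y) (k + z) ↔ IsSimpleQuadruple w x y z := by
  simp only [IsSimpleQuadruple, Nat.add_lt_add_iff_left]

lemma separable_dsum : Separable (dsum τ ρ) ↔ Separable τ ∧ Separable ρ := by
  simp only [separable_iff]
  refine ⟨fun h => ⟨?_, ?_⟩, fun ⟨hτ, hρ⟩ => ?_⟩ <;> intro a b c d hab hbc hcd hd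
  · have := h a b c d hab hbc hcd (by omega)
    rwa [natPerm_dsum_left τ ρ, natPerm_dsum_left τ ρ, natPerm_dsum_left τ ρ,
      natPerm_dsum_left τ ρ] at this <;> omega
  · have := h (k + a) (k + b) (k + c) (k + d) (by omega) (by omega) (by omega) (by omega)
    simpa only [natPerm_dsum_right, isSimpleQuadruple_add_left_iff] using this
  · intro hq
    have hside : d < k ∨ k ≤ a := by
      have hlt : ∀ i, i < k → natPerm (dsum τ ρ) i < k := fun i => natPerm_dsum_lt τ ρ
      have hge : ∀ i, k ≤ i → k ≤ natPerm (dsum τ ρ) i := fun i => le_natPerm_dsum τ ρ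
      have := hlt a; have := hlt b; have := hlt c
      have := hge b; have := hge c; have := hge d
      unfold IsSimpleQuadruple at hq
      omega
    rcases hside with hdk | hka
    · rw [natPerm_dsum_left τ ρ, natPerm_dsum_left τ ρ, natPerm_dsum_left τ ρ,
        natPerm_dsum_left τ ρ] at hq
      · exact hτ a b c d hab hbc hcd hdk hq
      all_goals omega
    · obtain ⟨a, rfl⟩ := Nat.exists_eq_add_of_le hka
      obtain ⟨b, rfl⟩ := Nat.exists_eq_add_of_le (show k ≤ b by omega)
      obtain ⟨c, rfl⟩ := Nat.exists_eq_add_of_le (show k ≤ c by omega)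
      obtain ⟨d, rfl⟩ := Nat.exists_eq_add_of_le (show k ≤ d by omega)
      simp only [natPerm_dsum_right, isSimpleQuadruple_add_left_iff] at hq
      exact hρ a b c d (by omega) (by omega) (by omega) (by omega) hq

lemma Bplus_dsum : Bplus (dsum τ ρ) = k ↔ Bplus τ = k := by
  have hmaps : ∀ j ≤ k, Set.MapsTo (natPerm (dsum τ ρ)) (Set.Iio j) (Set.Iio j) ↔
      Set.MapsTo (natPerm τ) (Set.Iio j) (Set.Iio j) := fun j hj =>
    Set.EqOn.mapsTo_iff fun i hi => natPerm_dsum_left τ ρ (lt_of_lt_of_le hi hj)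
  rw [Bplus_eq_iff, Bplus_eq_iff, hmaps k le_rfl]
  exact and_congr_right fun _ => forall₂_congr fun j hj => by rw [hmaps j hj.le]

lemma exists_dsum_eq {σ : Equiv.Perm (Fin (k + l))}
    (h : Set.MapsTo (natPerm σ) (Set.Iio k) (Set.Iio k)) :
    ∃ (τ : Equiv.Perm (Fin k)) (ρ : Equiv.Perm (Fin l)), dsum τ ρ = σ := by
  have hmaps : Set.MapsTo (finSumFinEquiv.symm.permCongr σ) (Set.range Sum.inl)
      (Set.range Sum.inl) := by
    rintro _ ⟨i, rfl⟩
    have hi : (σ (Fin.castAdd l i) : ℕ) < k := natPerm_val σ _ ▸ h i.isLt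
    exact ⟨⟨_, hi⟩, ((Equiv.symm_apply_eq finSumFinEquiv).mpr (Fin.ext rfl)).symm⟩
  obtain ⟨⟨τ, ρ⟩, hsum⟩ := Equiv.Perm.mem_sumCongrHom_range_of_perm_mapsTo_inl hmaps
  exact ⟨τ, ρ, (Equiv.eq_symm_apply finSumFinEquiv.permCongr).mp hsum⟩

end DirectSum

section DescentStatistics

variable {n k l : ℕ}

lemma descRuns_eq_runCount_pred (σ : Equiv.Perm (Fin n)) :
    descRuns σ = runCount (IsDescent (natPerm σ)) (n - 1) := by
  rcases n with - | m
  · rfl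
  · have hm : ¬ IsRunStart (IsDescent (natPerm σ)) m := fun h =>
      (succ_lt_of_isDescent_natPerm h.1).false
    rw [descRuns, runCount_succ, if_neg hm, Nat.add_sub_cancel, Nat.add_zero]

lemma descRuns_of_le_one (hn : n ≤ 1) (σ : Equiv.Perm (Fin n)) : descRuns σ = 0 := by
  rw [descRuns_eq_runCount_pred, Nat.sub_eq_zero_of_le hn, runCount_zero]

lemma isDescent_complPerm_iff (σ : Equiv.Perm (Fin n)) {i : ℕ} (hi : i + 1 < n) :
    IsDescent (natPerm (complPerm σ)) i ↔ ¬ IsDescent (natPerm σ) i := by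
  have hne : natPerm σ i ≠ natPerm σ (i + 1) := (natPerm σ).injective.ne i.lt_succ_self.ne
  rw [IsDescent, natPerm_complPerm_lt_iff σ _ hi _ (i.lt_succ_self.trans hi), IsDescent, not_lt]
  exact ⟨le_of_lt, fun h => lt_of_le_of_ne h hne⟩

lemma descRuns_complPerm_add (m : ℕ) (σ : Equiv.Perm (Fin (m + 2))) :
    descRuns (complPerm σ) + (if IsDescent (natPerm σ) 0 then 1 else 0) +
      (if IsDescent (natPerm σ) m then 1 else 0) = descRuns σ + 1 := by
  rw [descRuns_eq_runCount_pred, descRuns_eq_runCount_pred, Nat.add_succ_sub_one,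
    ← runCount_not_add]
  congr 2
  exact runCount_congr fun i hi => isDescent_complPerm_iff σ (by omega)

lemma isDescent_dsum_left (τ : Equiv.Perm (Fin k)) (ρ : Equiv.Perm (Fin l)) {i : ℕ} (hi : i < k) :
    IsDescent (natPerm (dsum τ ρ)) i ↔ IsDescent (natPerm τ) i := by
  rcases Nat.lt_or_ge (i + 1) k with hik | hik
  · rw [IsDescent, IsDescent, natPerm_dsum_left τ ρ hi, natPerm_dsum_left τ ρ hik]
  · refine iff_of_false (fun h => ?_) fun h => (succ_lt_of_isDescent_natPerm h).not_ge hik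
    exact h.not_gt ((natPerm_dsum_lt τ ρ hi).trans_le (le_natPerm_dsum τ ρ hik))

lemma isDescent_dsum_right (τ : Equiv.Perm (Fin k)) (ρ : Equiv.Perm (Fin l)) (j : ℕ) :
    IsDescent (natPerm (dsum τ ρ)) (k + j) ↔ IsDescent (natPerm ρ) j := by
  rw [IsDescent, IsDescent, Nat.add_assoc, natPerm_dsum_right, natPerm_dsum_right,
    Nat.add_lt_add_iff_left]

lemma descRuns_dsum (τ : Equiv.Perm (Fin k)) (ρ : Equiv.Perm (Fin l)) :
    descRuns (dsum τ ρ) = descRuns τ + descRuns ρ := by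
  have hjunction : ∀ j, k = j + 1 → ¬ IsDescent (natPerm (dsum τ ρ)) j := by
    rintro j rfl h
    exact (succ_lt_of_isDescent_natPerm ((isDescent_dsum_left τ ρ j.lt_succ_self).mp h)).false
  rw [descRuns, runCount_add hjunction, runCount_congr fun i => isDescent_dsum_left τ ρ (i := i),
    runCount_congr fun j _ => isDescent_dsum_right τ ρ j, descRuns, descRuns]

lemma isDescent_dsum_last (hk : 0 < k) (τ : Equiv.Perm (Fin k)) (ρ : Equiv.Perm (Fin l)) :
    IsDescent (natPerm (dsum τ ρ)) (k + l - 2) ↔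
      IsDescent (natPerm ρ) (l - 2) ∨ (l = 0 ∧ IsDescent (natPerm τ) (k - 2)) := by
  have hρ : IsDescent (natPerm ρ) (l - 2) → 2 ≤ l := fun h => by
    have := succ_lt_of_isDescent_natPerm h
    omega
  have hτ : IsDescent (natPerm τ) (k + l - 2) → l = 0 := fun h => by
    have := succ_lt_of_isDescent_natPerm h
    omega
  rcases le_or_gt 2 l with hl | hl
  · rw [Nat.add_sub_assoc hl, isDescent_dsum_right]
    exact (or_iff_left fun h => by omega).symm
  · rw [isDescent_dsum_left τ ρ (by omega), or_iff_right fun h => by have := hρ h; omega]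
    constructor
    · intro h
      obtain rfl := hτ h
      exact ⟨rfl, h⟩
    · rintro ⟨rfl, h⟩
      exact h

end DescentStatistics

section GeneratingFunctions

open PowerSeries

/-- The indecomposable separable permutations of `[n]`. -/
noncomputable def indecSEP (n : ℕ) : Finset (Equiv.Perm (Fin n)) :=
  (SEP n).filter fun σ => Bplus σ = n

/-- A real-valued statistic on permutations of all sizes. -/
abbrev PermStat : Type :=
  ∀ n : ℕ, Equiv.Perm (Fin n) → ℝ

/-- The generating function `∑ₙ (∑ σ ∈ C n, F n σ) Xⁿ` of a statistic `F` over a class `C` of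
permutations. -/
noncomputable def genFun (C : ∀ n, Finset (Equiv.Perm (Fin n))) : PermStat →ₗ[ℝ] ℝ⟦X⟧ where
  toFun F := PowerSeries.mk fun n => ∑ σ ∈ C n, F n σ
  map_add' F G := by
    ext n
    simp [Finset.sum_add_distrib]
  map_smul' c F := by
    ext n
    simp [Finset.mul_sum]

lemma coeff_genFun (C : ∀ n, Finset (Equiv.Perm (Fin n))) (F : PermStat) (n : ℕ) :
    coeff n (genFun C F) = ∑ σ ∈ C n, F n σ :=
  PowerSeries.coeff_mk n fun n => ∑ σ ∈ C n, F n σ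

lemma mem_SEP {n : ℕ} {σ : Equiv.Perm (Fin n)} : σ ∈ SEP n ↔ Separable σ := by
  simp [SEP]

lemma mem_indecSEP {n : ℕ} {σ : Equiv.Perm (Fin n)} :
    σ ∈ indecSEP n ↔ Separable σ ∧ Bplus σ = n := by
  simp [indecSEP, mem_SEP]

lemma SEP_of_le_one {n : ℕ} (hn : n ≤ 1) : SEP n = {1} := by
  have : Subsingleton (Equiv.Perm (Fin n)) := by
    interval_cases n <;> infer_instance
  refine Finset.eq_singleton_iff_unique_mem.mpr ⟨mem_SEP.mpr <| separable_iff.mpr ?_,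
    fun σ _ => Subsingleton.elim σ 1⟩
  intro a b c d
  omega

lemma pos_of_mem_indecSEP {n : ℕ} {σ : Equiv.Perm (Fin n)} (h : σ ∈ indecSEP n) : 0 < n :=
  (isLeast_Bplus σ).1.1.trans_eq (mem_indecSEP.mp h).2

lemma indecSEP_zero : indecSEP 0 = ∅ :=
  Finset.eq_empty_of_forall_notMem fun _ h => (pos_of_mem_indecSEP h).false

lemma indecSEP_one : indecSEP 1 = {1} := by
  rw [indecSEP, SEP_of_le_one le_rfl, Finset.filter_singleton, if_pos]
  exact le_antisymm (Bplus_le one_pos _) (isLeast_Bplus _).1.1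

lemma sum_SEP_filter_Bplus (F : PermStat) (k l : ℕ) :
    ∑ σ ∈ SEP (k + l) with Bplus σ = k, F (k + l) σ =
      ∑ τ ∈ indecSEP k, ∑ ρ ∈ SEP l, F (k + l) (dsum τ ρ) := by
  rw [← Finset.sum_product']
  refine (Finset.sum_nbij (fun p : Equiv.Perm (Fin k) × Equiv.Perm (Fin l) => dsum p.1 p.2)
    ?_ dsum_injective.injOn ?_ fun _ _ => rfl).symm
  · rintro ⟨τ, ρ⟩ hp
    simp only [Finset.mem_product, Finset.mem_filter, mem_indecSEP, mem_SEP, separable_dsum,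
      Bplus_dsum] at hp ⊢
    tauto
  · intro σ hσ
    simp only [Finset.coe_filter, Set.mem_ofPred_eq, mem_SEP] at hσ
    obtain ⟨hsep, hB⟩ := hσ
    obtain ⟨τ, ρ, rfl⟩ := exists_dsum_eq (Bplus_eq_iff.mp hB).1.2
    rw [separable_dsum] at hsep
    rw [Bplus_dsum] at hB
    refine ⟨(τ, ρ), ?_, rfl⟩
    simp only [Finset.coe_product, Set.mem_prod, Finset.mem_coe, mem_indecSEP, mem_SEP]
    exact ⟨⟨hsep.1, hB⟩, hsep.2⟩

lemma sum_SEP_eq_sum_dsum (F : PermStat) {n : ℕ} (hn : 0 < n) :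
    ∑ σ ∈ SEP n, F n σ =
      ∑ p ∈ antidiagonal n, ∑ τ ∈ indecSEP p.1, ∑ ρ ∈ SEP p.2,
        F (p.1 + p.2) (dsum τ ρ) := by
  have hmaps : ∀ σ ∈ SEP n, (Bplus σ, n - Bplus σ) ∈ antidiagonal n := fun σ _ =>
    mem_antidiagonal.mpr (Nat.add_sub_of_le (Bplus_le hn σ))
  rw [← Finset.sum_fiberwise_of_maps_to hmaps]
  refine Finset.sum_congr rfl fun p hp => ?_
  obtain ⟨k, l⟩ := p
  obtain rfl := mem_antidiagonal.mp hp
  rw [← sum_SEP_filter_Bplus]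
  refine Finset.sum_congr (Finset.filter_congr fun σ _ => ?_) fun _ _ => rfl
  rw [Prod.mk.injEq]
  omega

lemma genFun_SEP_of_dsum {F A B A' B' : PermStat}
    (h : ∀ k l, 0 < k → ∀ (τ : Equiv.Perm (Fin k)) (ρ : Equiv.Perm (Fin l)),
      F (k + l) (dsum τ ρ) = A k τ * B l ρ + A' k τ * B' l ρ) :
    genFun SEP F = C (F 0 1) + genFun indecSEP A * genFun SEP B +
      genFun indecSEP A' * genFun SEP B' := by
  ext n
  simp only [map_add, coeff_mul, coeff_genFun, Finset.sum_mul_sum]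
  rcases Nat.eq_zero_or_pos n with rfl | hn
  · simp [SEP_of_le_one, indecSEP_zero]
  · rw [coeff_C, if_neg hn.ne', zero_add, sum_SEP_eq_sum_dsum F hn]
    rw [← Finset.sum_add_distrib]
    refine Finset.sum_congr rfl fun p _ => ?_
    rw [← Finset.sum_add_distrib]
    refine Finset.sum_congr rfl fun τ hτ => ?_
    rw [← Finset.sum_add_distrib]
    exact Finset.sum_congr rfl fun ρ _ => h _ _ (pos_of_mem_indecSEP hτ) τ ρ

/-- The statistic `F` evaluated at the complement. -/
def complStat (F : PermStat) : PermStat :=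
  fun _ σ => F _ (complPerm σ)

lemma genFun_SEP_complStat (F : PermStat) : genFun SEP (complStat F) = genFun SEP F := by
  ext n
  rw [coeff_genFun, coeff_genFun]
  exact Finset.sum_nbij' complPerm complPerm (fun σ hσ => mem_SEP.mpr
    (separable_complPerm (mem_SEP.mp hσ))) (fun σ hσ => mem_SEP.mpr
    (separable_complPerm (mem_SEP.mp hσ))) (fun σ _ => complPerm_involutive σ)
    (fun σ _ => complPerm_involutive σ) fun σ _ => rfl

lemma sum_indecSEP_add_complPerm (F : PermStat) {n : ℕ} (hn : 2 ≤ n) :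
    ∑ σ ∈ indecSEP n, F n σ + ∑ σ ∈ indecSEP n, F n (complPerm σ) = ∑ σ ∈ SEP n, F n σ := by
  have hcompl : ∑ σ ∈ indecSEP n, F n (complPerm σ) = ∑ σ ∈ SEP n with Bplus σ ≠ n, F n σ := by
    refine Finset.sum_nbij' complPerm complPerm ?_ ?_ (fun σ _ => complPerm_involutive σ)
      (fun σ _ => complPerm_involutive σ) fun σ _ => rfl <;> intro σ hσ
    · obtain ⟨hsep, hB⟩ := mem_indecSEP.mp hσ
      rw [← complPerm_involutive σ, Bplus_complPerm hn (separable_complPerm hsep)] at hB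
      exact Finset.mem_filter.mpr ⟨mem_SEP.mpr (separable_complPerm hsep), hB⟩
    · obtain ⟨hsep, hB⟩ := Finset.mem_filter.mp hσ
      rw [mem_SEP] at hsep
      exact mem_indecSEP.mpr ⟨separable_complPerm hsep, (Bplus_complPerm hn hsep).mpr hB⟩
  rw [hcompl, indecSEP, Finset.sum_filter_add_sum_filter_not]

lemma genFun_indecSEP_add_complStat (F : PermStat) :
    genFun indecSEP F + genFun indecSEP (complStat F) =
      genFun SEP F - C (F 0 1) + C (F 1 1) * X := by
  ext n
  simp only [map_add, map_sub, coeff_genFun, complStat, coeff_C, coeff_C_mul, coeff_X]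
  rcases n with - | - | n
  · simp [SEP_of_le_one, indecSEP_zero]
  · simp [SEP_of_le_one, indecSEP_one, Subsingleton.elim (complPerm (1 : Equiv.Perm (Fin 1))) 1]
  · simpa using sum_indecSEP_add_complPerm F (n := n + 2) (by omega)

/-- The statistic `descRuns`, real-valued. -/
noncomputable def descRunsStat : PermStat :=
  fun _ σ => descRuns σ

/-- The indicator that a permutation of `[n]` has a descent at position `p n`. -/
noncomputable def descentAt (p : ℕ → ℕ) : PermStat :=
  fun n σ => if IsDescent (natPerm σ) (p n) then 1 else 0

/-- The indicator of the permutations of size `k`. -/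
noncomputable def sizeIndicator (k : ℕ) : PermStat :=
  fun n _ => if n = k then 1 else 0

lemma descentAt_of_le_one {n : ℕ} (hn : n ≤ 1) (p : ℕ → ℕ) (σ : Equiv.Perm (Fin n)) :
    descentAt p n σ = 0 :=
  if_neg fun h => by
    have := succ_lt_of_isDescent_natPerm h
    omega

lemma complStat_one : complStat 1 = 1 :=
  rfl

lemma complStat_descentAt {p : ℕ → ℕ} (hp : ∀ n, 2 ≤ n → p n + 1 < n) :
    complStat (descentAt p) = 1 - sizeIndicator 0 - sizeIndicator 1 - descentAt p := by
  funext n σ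
  rcases Nat.lt_or_ge n 2 with hn | hn
  · rw [complStat, descentAt_of_le_one (by omega)]
    simp only [Pi.sub_apply, descentAt_of_le_one (Nat.le_of_lt_succ hn)]
    interval_cases n <;> simp [sizeIndicator]
  · have h := isDescent_complPerm_iff σ (hp n hn)
    by_cases hσ : IsDescent (natPerm σ) (p n) <;>
      simp [complStat, descentAt, sizeIndicator, h, hσ, show n ≠ 0 by omega,
        show n ≠ 1 by omega]

lemma complStat_descRunsStat :
    complStat descRunsStat = descRunsStat + 1 - descentAt (fun _ => 0) -
      descentAt (fun n => n - 2) - sizeIndicator 0 - sizeIndicator 1 := by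
  funext n σ
  rcases Nat.lt_or_ge n 2 with hn | hn
  · simp only [complStat, descRunsStat, Pi.add_apply, Pi.sub_apply, Pi.one_apply,
      descentAt_of_le_one (Nat.le_of_lt_succ hn), descRuns_of_le_one (Nat.le_of_lt_succ hn)]
    interval_cases n <;> simp [sizeIndicator]
  · obtain ⟨m, rfl⟩ := Nat.exists_eq_add_of_le' hn
    have h := congrArg (Nat.cast (R := ℝ)) (descRuns_complPerm_add m σ)
    push_cast at h
    simp only [complStat, descRunsStat, descentAt, sizeIndicator, Pi.add_apply, Pi.sub_apply,
      Pi.one_apply, Nat.add_sub_cancel, if_neg (show m + 2 ≠ 0 by omega),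
      if_neg (show m + 2 ≠ 1 by omega)]
    linarith

lemma genFun_SEP_sizeIndicator {k : ℕ} (hk : k ≤ 1) : genFun SEP (sizeIndicator k) = X ^ k := by
  ext n
  rw [coeff_genFun, coeff_X_pow]
  by_cases hn : n = k
  · subst hn
    simp [sizeIndicator, SEP_of_le_one hk]
  · simp [sizeIndicator, hn]

lemma genFun_indecSEP_sizeIndicator_zero : genFun indecSEP (sizeIndicator 0) = 0 := by
  ext n
  rw [coeff_genFun]
  by_cases hn : n = 0
  · subst hn
    simp [indecSEP_zero]
  · simp [sizeIndicator, hn]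

lemma genFun_indecSEP_sizeIndicator_one : genFun indecSEP (sizeIndicator 1) = X := by
  ext n
  rw [coeff_genFun, coeff_X]
  by_cases hn : n = 1
  · subst hn
    simp [sizeIndicator, indecSEP_one]
  · simp [sizeIndicator, hn]

lemma genFun_SEP_one_eq : genFun SEP 1 = 1 + genFun indecSEP 1 * genFun SEP 1 := by
  simpa using genFun_SEP_of_dsum (F := 1) (A := 1) (B := 1) (A' := 0) (B' := 0) (by simp)

lemma two_mul_genFun_indecSEP_one : 2 * genFun indecSEP 1 = genFun SEP 1 - 1 + X := by
  have h := genFun_indecSEP_add_complStat 1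
  rw [complStat_one] at h
  simpa [two_mul] using h

lemma genFun_SEP_descRunsStat :
    genFun SEP descRunsStat =
      genFun indecSEP descRunsStat * genFun SEP 1 +
        genFun indecSEP 1 * genFun SEP descRunsStat := by
  simpa [descRunsStat, descRuns_of_le_one] using genFun_SEP_of_dsum (F := descRunsStat)
    (A := descRunsStat) (B := 1) (A' := 1) (B' := descRunsStat)
    (by simp [descRunsStat, descRuns_dsum])

lemma two_mul_genFun_indecSEP_descRunsStat :
    2 * genFun indecSEP descRunsStat + genFun indecSEP 1 - X
        - genFun indecSEP (descentAt fun _ => 0) - genFun indecSEP (descentAt fun n => n - 2) =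
      genFun SEP descRunsStat := by
  have h := genFun_indecSEP_add_complStat descRunsStat
  rw [complStat_descRunsStat] at h
  simp only [map_add, map_sub, genFun_indecSEP_sizeIndicator_zero,
    genFun_indecSEP_sizeIndicator_one, descRunsStat, descRuns_of_le_one zero_le_one,
    descRuns_of_le_one le_rfl, Nat.cast_zero, map_zero] at h
  linear_combination h

lemma two_mul_genFun_SEP_descentAt {p : ℕ → ℕ} (hp : ∀ n, 2 ≤ n → p n + 1 < n) :
    2 * genFun SEP (descentAt p) = genFun SEP 1 - 1 - X := by
  have h := genFun_SEP_complStat (descentAt p)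
  simp only [complStat_descentAt hp, map_sub, genFun_SEP_sizeIndicator zero_le_one,
    genFun_SEP_sizeIndicator le_rfl, pow_zero, pow_one] at h
  linear_combination -h

lemma genFun_SEP_descentAt_first :
    genFun SEP (descentAt fun _ => 0) = genFun indecSEP (descentAt fun _ => 0) * genFun SEP 1 := by
  simpa [descentAt_of_le_one] using genFun_SEP_of_dsum (F := descentAt fun _ => 0)
    (A := descentAt fun _ => 0) (B := 1) (A' := 0) (B' := 0) fun k l hk τ ρ => by
      simp [descentAt, isDescent_dsum_left τ ρ hk]

lemma genFun_SEP_descentAt_last :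
    genFun SEP (descentAt fun n => n - 2) =
      genFun indecSEP 1 * genFun SEP (descentAt fun n => n - 2) +
        genFun indecSEP (descentAt fun n => n - 2) := by
  simpa [descentAt_of_le_one, genFun_SEP_sizeIndicator] using
    genFun_SEP_of_dsum (F := descentAt fun n => n - 2) (A := 1) (B := descentAt fun n => n - 2)
      (A' := descentAt fun n => n - 2) (B' := sizeIndicator 0) fun k l hk τ ρ => by
        rcases Nat.eq_zero_or_pos l with rfl | hl
        · have h : IsDescent (natPerm (dsum τ ρ)) (k - 2) ↔ IsDescent (natPerm τ) (k - 2) :=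
            isDescent_dsum_left τ ρ (by omega)
          have hρ : ¬ IsDescent (natPerm ρ) 0 := fun hρ =>
            (succ_lt_of_isDescent_natPerm hρ).not_ge (Nat.zero_le _)
          simp [descentAt, sizeIndicator, h, hρ]
        · simp [descentAt, sizeIndicator, isDescent_dsum_last hk, hl.ne']

/-- The generating function of the nonempty separable permutations. -/
noncomputable def sepSeries : ℝ⟦X⟧ :=
  genFun SEP 1 - 1

lemma sepSeries_eq : sepSeries = X + sepSeries ^ 2 + X * sepSeries := by
  rw [sepSeries]
  linear_combination 2 * genFun_SEP_one_eq + genFun SEP 1 * two_mul_genFun_indecSEP_one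

/-- The descent-run generating function of indecomposable separable permutations. -/
noncomputable def indecDescRunSeries : ℝ⟦X⟧ :=
  genFun indecSEP descRunsStat

lemma two_mul_genFun_indecSEP_descentAt_first :
    2 * genFun indecSEP (descentAt fun _ => 0) =
      (genFun SEP 1 - 1 - X) * (1 - genFun indecSEP 1) := by
  have hS : 2 * genFun SEP (descentAt fun _ => 0) = genFun SEP 1 - 1 - X :=
    two_mul_genFun_SEP_descentAt fun n hn => by omega
  linear_combination (1 - genFun indecSEP 1) * hS -
    2 * (1 - genFun indecSEP 1) * genFun_SEP_descentAt_first -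
    2 * genFun indecSEP (descentAt fun _ => 0) * genFun_SEP_one_eq

lemma two_mul_genFun_indecSEP_descentAt_last :
    2 * genFun indecSEP (descentAt fun n => n - 2) =
      (genFun SEP 1 - 1 - X) * (1 - genFun indecSEP 1) := by
  have hS : 2 * genFun SEP (descentAt fun n => n - 2) = genFun SEP 1 - 1 - X :=
    two_mul_genFun_SEP_descentAt fun n hn => by omega
  linear_combination (1 - genFun indecSEP 1) * hS - 2 * genFun_SEP_descentAt_last

lemma two_sub_sq_mul_indecDescRunSeries :
    2 * (2 - genFun SEP 1 ^ 2) * indecDescRunSeries = 2 * X * genFun indecSEP 1 := by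
  have hSEP : genFun SEP descRunsStat = indecDescRunSeries * genFun SEP 1 ^ 2 := by
    rw [indecDescRunSeries]
    linear_combination genFun SEP 1 * genFun_SEP_descRunsStat -
      genFun SEP descRunsStat * genFun_SEP_one_eq
  rw [indecDescRunSeries] at hSEP ⊢
  linear_combination 2 * two_mul_genFun_indecSEP_descRunsStat +
    two_mul_genFun_indecSEP_descentAt_first + two_mul_genFun_indecSEP_descentAt_last + 2 * hSEP +
    2 * genFun_SEP_one_eq

lemma mul_indecDescRunSeries :
    (1 - X - 2 * sepSeries) * (4 * indecDescRunSeries) =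
      X * (sepSeries + X) * (2 - X - sepSeries) := by
  rw [sepSeries]
  linear_combination 2 * (1 - genFun indecSEP 1) * two_sub_sq_mul_indecDescRunSeries +
    4 * indecDescRunSeries * (two_mul_genFun_indecSEP_one + genFun SEP 1 * genFun_SEP_one_eq) +
    X * (3 - 2 * genFun indecSEP 1 - genFun SEP 1 - X) * two_mul_genFun_indecSEP_one

lemma coeff_zero_sepSeries : coeff 0 sepSeries = 0 := by
  rw [sepSeries, map_sub, coeff_genFun, coeff_zero_one, SEP_of_le_one zero_le_one]
  simp

lemma coeff_sepSeries {n : ℕ} (hn : n ≠ 0) : coeff n sepSeries = #(SEP n) := by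
  simp [sepSeries, coeff_genFun, coeff_one, hn]

lemma coeff_sepSeries_nonneg (n : ℕ) : 0 ≤ coeff n sepSeries := by
  rcases eq_or_ne n 0 with rfl | hn
  · exact coeff_zero_sepSeries.ge
  · exact (coeff_sepSeries hn).symm ▸ Nat.cast_nonneg _

lemma coeff_indecDescRunSeries (n : ℕ) :
    coeff n indecDescRunSeries = ∑ σ ∈ indecSEP n, (descRuns σ : ℝ) :=
  coeff_genFun indecSEP descRunsStat n

lemma coeff_zero_indecDescRunSeries : coeff 0 indecDescRunSeries = 0 := by
  rw [coeff_indecDescRunSeries, indecSEP_zero, Finset.sum_empty]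

lemma abs_coeff_indecDescRunSeries_le (n : ℕ) :
    |coeff n indecDescRunSeries| ≤ n * coeff n sepSeries := by
  rcases eq_or_ne n 0 with rfl | hn
  · rw [coeff_zero_indecDescRunSeries, abs_zero, Nat.cast_zero, zero_mul]
  · rw [coeff_indecDescRunSeries, coeff_sepSeries hn,
      abs_of_nonneg (Finset.sum_nonneg fun σ _ => Nat.cast_nonneg _), mul_comm, ← nsmul_eq_mul]
    calc ∑ σ ∈ indecSEP n, (descRuns σ : ℝ) ≤ #(indecSEP n) • (n : ℝ) :=
          Finset.sum_le_card_nsmul _ _ _ fun σ _ => Nat.cast_le.mpr (runCount_le _ n)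
      _ ≤ #(SEP n) • (n : ℝ) :=
          nsmul_le_nsmul_left n.cast_nonneg (Finset.card_filter_le _ _)

lemma two_mul_card_indecSEP {n : ℕ} (hn : 2 ≤ n) : 2 * #(indecSEP n) = #(SEP n) := by
  have h := sum_indecSEP_add_complPerm 1 hn
  simp only [Pi.one_apply, Finset.sum_const, nsmul_one] at h
  rw [two_mul]
  exact_mod_cast h

lemma indecExp_eq_sum_indecSEP_div (n : ℕ) (f : Equiv.Perm (Fin n) → ℝ) :
    indecExp n f = (∑ σ ∈ indecSEP n, f σ) / #(indecSEP n) :=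
  rfl

lemma card_SEP_mul_indecExp_altTypeLen (n : ℕ) :
    #(SEP n) * indecExp n (fun σ => (altTypeLen σ false false : ℝ)) =
      coeff n (4 * indecDescRunSeries) := by
  rw [← map_ofNat (C (R := ℝ)), coeff_C_mul, coeff_indecDescRunSeries]
  simp only [indecExp_eq_sum_indecSEP_div, altTypeLen_false_false, Nat.cast_mul, ← Finset.mul_sum]
  rcases Nat.lt_or_ge n 2 with hn | hn
  · simp [descRuns_of_le_one (Nat.le_of_lt_succ hn)]
  · rcases (indecSEP n).eq_empty_or_nonempty with hempty | hne
    · simp [hempty]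
    · have hcard : (#(indecSEP n) : ℝ) ≠ 0 := Nat.cast_ne_zero.mpr hne.card_ne_zero
      rw [← two_mul_card_indecSEP hn]
      push_cast
      field_simp
      ring

end GeneratingFunctions

section Evaluation

open PowerSeries

section NormedRing

variable {R : Type*} [NormedCommRing R] {f g : R⟦X⟧} {t a b : R}

/-- The power series `f` converges absolutely at `t`, with sum `a`. -/
def HasNormSumAt (f : R⟦X⟧) (t a : R) : Prop :=
  (Summable fun n => ‖coeff n f * t ^ n‖) ∧ HasSum (fun n => coeff n f * t ^ n) a

lemma HasNormSumAt.unique (hf : HasNormSumAt f t a) (hg : HasNormSumAt f t b) : a = b :=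
  hf.2.unique hg.2

lemma HasNormSumAt.add (hf : HasNormSumAt f t a) (hg : HasNormSumAt g t b) :
    HasNormSumAt (f + g) t (a + b) := by
  simp only [HasNormSumAt, map_add, add_mul]
  exact ⟨(hf.1.add hg.1).of_nonneg_of_le (fun _ => norm_nonneg _) fun _ => norm_add_le _ _,
    hf.2.add hg.2⟩

lemma HasNormSumAt.sub (hf : HasNormSumAt f t a) (hg : HasNormSumAt g t b) :
    HasNormSumAt (f - g) t (a - b) := by
  simp only [HasNormSumAt, map_sub, sub_mul]
  exact ⟨(hf.1.add hg.1).of_nonneg_of_le (fun _ => norm_nonneg _) fun _ => norm_sub_le _ _,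
    hf.2.sub hg.2⟩

lemma HasNormSumAt.mul [CompleteSpace R] (hf : HasNormSumAt f t a) (hg : HasNormSumAt g t b) :
    HasNormSumAt (f * g) t (a * b) := by
  have hcoeff : ∀ n, coeff n (f * g) * t ^ n =
      ∑ p ∈ antidiagonal n, coeff p.1 f * t ^ p.1 * (coeff p.2 g * t ^ p.2) := fun n => by
    rw [coeff_mul, Finset.sum_mul]
    refine Finset.sum_congr rfl fun p hp => ?_
    rw [← mem_antidiagonal.mp hp, pow_add]
    ring
  simp only [HasNormSumAt, hcoeff]
  have hnorm := summable_norm_sum_mul_antidiagonal_of_summable_norm hf.1 hg.1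
  refine ⟨hnorm, ?_⟩
  rw [← hf.2.tsum_eq, ← hg.2.tsum_eq,
    tsum_mul_tsum_eq_tsum_sum_antidiagonal_of_summable_norm hf.1 hg.1]
  exact hnorm.of_norm.hasSum

lemma hasNormSumAt_monomial (k : ℕ) (c t : R) :
    HasNormSumAt (PowerSeries.monomial k c) t (c * t ^ k) := by
  have hcoeff : ∀ n, n ≠ k → coeff n (PowerSeries.monomial k c) * t ^ n = 0 := fun n hn => by
    rw [coeff_monomial, if_neg hn, zero_mul]
  refine ⟨summable_of_ne_finset_zero (s := {k}) fun n hn => ?_, ?_⟩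
  · rw [hcoeff n (by simpa using hn), norm_zero]
  · simpa only [coeff_monomial_same] using hasSum_single k hcoeff

lemma hasNormSumAt_X (t : R) : HasNormSumAt X t t := by
  simpa [X_eq] using hasNormSumAt_monomial 1 1 t

lemma hasNormSumAt_ofNat (m : ℕ) [m.AtLeastTwo] (t : R) :
    HasNormSumAt (OfNat.ofNat m : R⟦X⟧) t (OfNat.ofNat m) := by
  simpa [← map_ofNat (C (R := R))] using hasNormSumAt_monomial 0 (OfNat.ofNat m) t

lemma hasNormSumAt_one (t : R) : HasNormSumAt 1 t 1 := by
  simpa using hasNormSumAt_monomial 0 1 t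

end NormedRing

section Majorant

variable {f g : ℝ⟦X⟧} {x : ℝ}

lemma sum_range_coeff_X_mul_pow_le (hx : 0 ≤ x) (N : ℕ) :
    ∑ n ∈ range N, coeff n (X : ℝ⟦X⟧) * x ^ n ≤ x := by
  simp only [coeff_X, ite_mul, one_mul, zero_mul, Finset.sum_ite_eq']
  split_ifs
  exacts [(pow_one x).le, hx]

lemma sum_range_coeff_mul_mul_pow_le (hf : ∀ n, 0 ≤ coeff n f) (hg : ∀ n, 0 ≤ coeff n g)
    (hf0 : coeff 0 f = 0) (hg0 : coeff 0 g = 0) (hx : 0 ≤ x) (N : ℕ) :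
    ∑ n ∈ range (N + 1), coeff n (f * g) * x ^ n ≤
      (∑ n ∈ range N, coeff n f * x ^ n) * ∑ n ∈ range N, coeff n g * x ^ n := by
  have hnn : ∀ p : ℕ × ℕ, 0 ≤ coeff p.1 f * x ^ p.1 * (coeff p.2 g * x ^ p.2) := fun p =>
    mul_nonneg (mul_nonneg (hf _) (pow_nonneg hx _)) (mul_nonneg (hg _) (pow_nonneg hx _))
  rw [Finset.sum_mul_sum, ← Finset.sum_product']
  refine le_trans (Finset.sum_congr rfl fun n hn => ?_).le
    (Finset.sum_fiberwise_le_sum_of_sum_fiber_nonneg (t := range (N + 1))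
      (g := fun p => p.1 + p.2) fun _ _ => Finset.sum_nonneg fun p _ => hnn p)
  have hsub : {p ∈ range N ×ˢ range N | p.1 + p.2 = n} ⊆ antidiagonal n :=
    fun p hp => mem_antidiagonal.mpr (Finset.mem_filter.mp hp).2
  rw [Finset.sum_subset hsub, coeff_mul, Finset.sum_mul]
  · refine Finset.sum_congr rfl fun p hp => ?_
    rw [← mem_antidiagonal.mp hp, pow_add]
    ring
  · intro p hp hp'
    have hpn := mem_antidiagonal.mp hp
    simp only [Finset.mem_filter, Finset.mem_product, Finset.mem_range, hpn, and_true] at hp' hn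
    obtain h | h : p.1 = 0 ∨ p.2 = 0 := by omega
    · rw [h, hf0, zero_mul, zero_mul]
    · rw [h, hg0, zero_mul, mul_zero]

lemma summable_nat_mul_mul_pow_of_bounded {a : ℕ → ℝ} {r B t : ℝ} (ha : ∀ n, 0 ≤ a n)
    (hB : ∀ n, a n * r ^ n ≤ B) (ht : |t| < r) : Summable fun n : ℕ => n * a n * |t| ^ n := by
  have hr : 0 < r := (abs_nonneg t).trans_lt ht
  have hq : ‖|t| / r‖ < 1 := by
    rwa [Real.norm_of_nonneg (by positivity), div_lt_one hr]
  have hs := (summable_pow_mul_geometric_of_norm_lt_one 1 hq).mul_left B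
  refine hs.of_nonneg_of_le (fun n => by have := ha n; positivity) fun n => ?_
  calc n * a n * |t| ^ n = a n * r ^ n * (n ^ 1 * (|t| / r) ^ n) := by
        rw [div_pow]
        field_simp
    _ ≤ B * (n ^ 1 * (|t| / r) ^ n) := mul_le_mul_of_nonneg_right (hB n) (by positivity)

end Majorant

lemma sum_range_coeff_sepSeries_mul_pow_le {r s : ℝ} (hr : 0 ≤ r) (hs : 0 ≤ s)
    (h : r + s ^ 2 + r * s ≤ s) (N : ℕ) : ∑ n ∈ range N, coeff n sepSeries * r ^ n ≤ s := by
  induction N with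
  | zero => simpa using hs
  | succ N ih =>
    have hX : ∀ n, 0 ≤ coeff n (X : ℝ⟦X⟧) := fun n => by
      rw [coeff_X]
      split_ifs <;> norm_num
    have hnn : 0 ≤ ∑ n ∈ range N, coeff n sepSeries * r ^ n := Finset.sum_nonneg fun n _ =>
      mul_nonneg (coeff_sepSeries_nonneg n) (pow_nonneg hr n)
    calc ∑ n ∈ range (N + 1), coeff n sepSeries * r ^ n
        = ∑ n ∈ range (N + 1), coeff n (X : ℝ⟦X⟧) * r ^ n +
            ∑ n ∈ range (N + 1), coeff n (sepSeries * sepSeries) * r ^ n +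
            ∑ n ∈ range (N + 1), coeff n (X * sepSeries) * r ^ n := by
          conv_lhs => rw [sepSeries_eq]
          simp only [map_add, add_mul, Finset.sum_add_distrib, pow_two]
      _ ≤ r + s * s + r * s := by
          gcongr
          · exact sum_range_coeff_X_mul_pow_le hr _
          · exact (sum_range_coeff_mul_mul_pow_le coeff_sepSeries_nonneg coeff_sepSeries_nonneg
              coeff_zero_sepSeries coeff_zero_sepSeries hr N).trans (mul_le_mul ih ih hnn hs)
          · exact (sum_range_coeff_mul_mul_pow_le hX coeff_sepSeries_nonneg coeff_zero_X
              coeff_zero_sepSeries hr N).trans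
              (mul_le_mul (sum_range_coeff_X_mul_pow_le hr _) ih hnn hr)
      _ ≤ s := by rwa [← pow_two]

lemma sum_range_coeff_sepSeries_le (N : ℕ) :
    ∑ n ∈ range N, coeff n sepSeries * (3 - 2 * √2) ^ n ≤ √2 - 1 := by
  have h2 : √2 ^ 2 = 2 := Real.sq_sqrt zero_le_two
  have hsq : 3 - 2 * √2 = (√2 - 1) ^ 2 := by linear_combination -h2
  refine sum_range_coeff_sepSeries_mul_pow_le (hsq ▸ sq_nonneg _)
    (sub_nonneg.mpr (Real.one_le_sqrt.mpr one_le_two)) (le_of_eq ?_) N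
  linear_combination -h2

lemma exists_hasNormSumAt {f : ℝ⟦X⟧} (hf : ∀ n, |coeff n f| ≤ n * coeff n sepSeries) {t : ℝ}
    (ht : |t| < 3 - 2 * √2) : ∃ a, HasNormSumAt f t a := by
  have hr : 0 ≤ 3 - 2 * √2 := (abs_nonneg t).trans ht.le
  have hbound : ∀ n, coeff n sepSeries * (3 - 2 * √2) ^ n ≤ √2 - 1 := fun n =>
    (Finset.single_le_sum (f := fun n => coeff n sepSeries * (3 - 2 * √2) ^ n)
      (fun i _ => mul_nonneg (coeff_sepSeries_nonneg i) (pow_nonneg hr i))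
      (self_mem_range_succ n)).trans (sum_range_coeff_sepSeries_le (n + 1))
  have hsum : Summable fun n => ‖coeff n f * t ^ n‖ :=
    (summable_nat_mul_mul_pow_of_bounded coeff_sepSeries_nonneg hbound ht).of_nonneg_of_le
      (fun _ => norm_nonneg _) fun n => by
        rw [norm_mul, norm_pow, Real.norm_eq_abs, Real.norm_eq_abs]
        exact mul_le_mul_of_nonneg_right (hf n) (by positivity)
  exact ⟨_, hsum, hsum.of_norm.hasSum⟩

lemma abs_coeff_sepSeries_le (n : ℕ) : |coeff n sepSeries| ≤ n * coeff n sepSeries := by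
  rcases Nat.eq_zero_or_pos n with rfl | hn
  · rw [coeff_zero_sepSeries, abs_zero, mul_zero]
  · rw [abs_of_nonneg (coeff_sepSeries_nonneg n)]
    exact le_mul_of_one_le_left (coeff_sepSeries_nonneg n) (mod_cast hn)

lemma HasNormSumAt.sepSeries_le {t s : ℝ} (hs : HasNormSumAt sepSeries t s)
    (ht : |t| < 3 - 2 * √2) : s ≤ √2 - 1 := by
  refine le_of_tendsto' hs.2.tendsto_sum_nat fun N => ?_
  refine (Finset.sum_le_sum fun n _ => ?_).trans (sum_range_coeff_sepSeries_le N)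
  refine mul_le_mul_of_nonneg_left ?_ (coeff_sepSeries_nonneg n)
  exact (le_abs_self _).trans ((abs_pow t n).trans_le (pow_le_pow_left₀ (abs_nonneg t) ht.le n))

lemma HasNormSumAt.sepSeries_eq {t s : ℝ} (hs : HasNormSumAt sepSeries t s) :
    s = t + s * s + t * s := by
  have hX := hasNormSumAt_X t
  have h := (hX.add (hs.mul hs)).add (hX.mul hs)
  rw [← pow_two, ← _root_.sepSeries_eq] at h
  exact hs.unique h

lemma HasNormSumAt.sqrt_eq {t s : ℝ} (hs : HasNormSumAt sepSeries t s) (ht : |t| < 3 - 2 * √2) :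
    √(t ^ 2 - 6 * t + 1) = 1 - t - 2 * s := by
  have hpos : 0 ≤ 1 - t - 2 * s := by
    linarith [hs.sepSeries_le ht, (le_abs_self t).trans ht.le]
  rw [show t ^ 2 - 6 * t + 1 = (1 - t - 2 * s) ^ 2 by linear_combination 4 * hs.sepSeries_eq,
    Real.sqrt_sq hpos]

lemma HasNormSumAt.mul_four_indecDescRunSeries_eq {t s p : ℝ} (hs : HasNormSumAt sepSeries t s)
    (hp : HasNormSumAt (4 * indecDescRunSeries) t p) :
    (1 - t - 2 * s) * p = t * (s + t) * (2 - t - s) := by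
  have hX := hasNormSumAt_X t
  have h2 : HasNormSumAt 2 t 2 := hasNormSumAt_ofNat 2 t
  have hlhs := (((hasNormSumAt_one t).sub hX).sub (h2.mul hs)).mul hp
  rw [mul_indecDescRunSeries] at hlhs
  exact hlhs.unique ((hX.mul (hs.add hX)).mul ((h2.sub hX).sub hs))

lemma hasNormSumAt_four_mul_indecDescRunSeries {t : ℝ} (ht : |t| < 3 - 2 * √2) :
    HasNormSumAt (4 * indecDescRunSeries) t
      (t * (1 - t) / √(t ^ 2 - 6 * t + 1) - t * (1 - t) / 2 -
        (t / 2) * √(t ^ 2 - 6 * t + 1)) := by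
  obtain ⟨s, hs⟩ := exists_hasNormSumAt abs_coeff_sepSeries_le ht
  obtain ⟨p, hp⟩ := exists_hasNormSumAt abs_coeff_indecDescRunSeries_le ht
  have h4p : HasNormSumAt (4 * indecDescRunSeries) t (4 * p) := (hasNormSumAt_ofNat 4 t).mul hp
  have hpos : 0 < 1 - t - 2 * s := by
    linarith [hs.sepSeries_le ht, (le_abs_self t).trans_lt ht]
  have hp_eq := hs.mul_four_indecDescRunSeries_eq h4p
  convert h4p using 1
  rw [hs.sqrt_eq ht]
  field_simp
  linear_combination -2 * hp_eq + 2 * t * hs.sepSeries_eq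

end Evaluation

/-- The generating function
`G^{-,-}(t) = ∑_{n≥1} sₙ cₙ^{-,-} tⁿ = t(1-t)/√(t²-6t+1) - t(1-t)/2 - (t/2)√(t²-6t+1)`
for `|t| < 3 - 2√2`, where `cₙ^{-,-}` is the mean of `Aₙ^{-,-}` over indecomposable
separable permutations of `[n]`. -/
theorem genfun_G_mm (t : ℝ) (ht : |t| < 3 - 2 * Real.sqrt 2) :
    HasSum (fun n : ℕ => ((SEP (n + 1)).card : ℝ) *
        indecExp (n + 1) (fun σ => (altTypeLen σ false false : ℝ)) * t ^ (n + 1))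
      (t * (1 - t) / Real.sqrt (t ^ 2 - 6 * t + 1) - t * (1 - t) / 2 -
        (t / 2) * Real.sqrt (t ^ 2 - 6 * t + 1)) := by
  have hG := (hasNormSumAt_four_mul_indecDescRunSeries ht).2
  rw [← hasSum_nat_add_iff' 1, Finset.sum_range_one] at hG
  simpa [← card_SEP_mul_indecExp_altTypeLen, indecExp_eq_sum_indecSEP_div, indecSEP_zero] using hG
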